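/- arXiv:1908.00646 — 4 statements merged into one kernel-verified Lean document; each statement's English description precedes it below -/
import Mathlib

section
/- Let n be a positive integer and let Z_i, Z_j ∈ ℝ^{n×2} be two landmark configuration matrices. Write the 2×2 matrix Z_jᵀ Z_i as [[a, b], [c, d]]. Then the minimum over all rotation matrices Q ∈ SO(2) of the squared Frobenius norm ‖Z_j Q − Z_i‖_F² exists and equals tr(Z_i Z_iᵀ) + tr(Z_j Z_jᵀ) − 2·√((a + d)² + (c − b)²). -/
open Matrix

theorem proc_expand (n : ℕ) (Zi Zj : Matrix (Fin n) (Fin 2) ℝ)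
    (Q : Matrix (Fin 2) (Fin 2) ℝ) (hQ : Qᵀ * Q = 1) :
    Matrix.trace ((Zj * Q - Zi)ᵀ * (Zj * Q - Zi)) =
      Matrix.trace (Zi * Ziᵀ) + Matrix.trace (Zj * Zjᵀ)
        - 2 * Matrix.trace (Qᵀ * (Zjᵀ * Zi)) := by
  have hQ' : Q * Qᵀ = 1 := mul_eq_one_comm.mp hQ
  have h1 : Matrix.trace (Qᵀ * Zjᵀ * (Zj * Q)) = Matrix.trace (Zj * Zjᵀ) := by
    rw [Matrix.trace_mul_comm, Matrix.mul_assoc, ← Matrix.mul_assoc Q, hQ', Matrix.one_mul]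
  have h2 : Matrix.trace (Ziᵀ * (Zj * Q)) = Matrix.trace (Qᵀ * (Zjᵀ * Zi)) := by
    rw [← Matrix.trace_transpose]
    simp [Matrix.transpose_mul, Matrix.mul_assoc]
  have h3 : Matrix.trace (Ziᵀ * Zi) = Matrix.trace (Zi * Ziᵀ) := Matrix.trace_mul_comm _ _
  rw [Matrix.transpose_sub, Matrix.transpose_mul, Matrix.sub_mul, Matrix.mul_sub, Matrix.mul_sub]
  simp only [Matrix.trace_sub]
  rw [h1, h2, h3, Matrix.mul_assoc]
  ring

/-- For `Z_i, Z_j ∈ ℝ^{n×2}`, writing `Z_jᵀ Z_i = [[a,b],[c,d]]`, the minimum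
over rotation matrices `Q ∈ SO(2)` of `‖Z_j Q − Z_i‖_F²` exists and equals
`tr(Z_i Z_iᵀ) + tr(Z_j Z_jᵀ) − 2 √((a+d)² + (c−b)²)`. -/
theorem stmt0 (n : ℕ) (hn : 0 < n) (Zi Zj : Matrix (Fin n) (Fin 2) ℝ)
    (a b c d : ℝ)
    (ha : a = (Zjᵀ * Zi) 0 0) (hb : b = (Zjᵀ * Zi) 0 1)
    (hc : c = (Zjᵀ * Zi) 1 0) (hd : d = (Zjᵀ * Zi) 1 1) :
    IsLeast
      {x : ℝ | ∃ Q : Matrix (Fin 2) (Fin 2) ℝ, Qᵀ * Q = 1 ∧ Q.det = 1 ∧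
        x = Matrix.trace ((Zj * Q - Zi)ᵀ * (Zj * Q - Zi))}
      (Matrix.trace (Zi * Ziᵀ) + Matrix.trace (Zj * Zjᵀ)
        - 2 * Real.sqrt ((a + d) ^ 2 + (c - b) ^ 2)) := by
  have key : ∀ Q : Matrix (Fin 2) (Fin 2) ℝ, Matrix.trace (Qᵀ * (Zjᵀ * Zi)) =
      Q 0 0 * a + Q 1 0 * c + (Q 0 1 * b + Q 1 1 * d) := by
    intro Q
    rw [ha, hb, hc, hd, Matrix.trace_fin_two, Matrix.mul_apply, Matrix.mul_apply]
    simp only [Fin.sum_univ_two, Matrix.transpose_apply Q]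
  set r := Real.sqrt ((a + d) ^ 2 + (c - b) ^ 2) with hr
  have hr0 : 0 ≤ r := Real.sqrt_nonneg _
  have hr2 : r ^ 2 = (a + d) ^ 2 + (c - b) ^ 2 := Real.sq_sqrt (by positivity)
  constructor
  · obtain ⟨p, q, hpq, hv⟩ : ∃ p q : ℝ, p ^ 2 + q ^ 2 = 1 ∧ p * (a + d) + q * (c - b) = r := by
      by_cases h : r = 0
      · refine ⟨1, 0, by norm_num, ?_⟩
        rw [h] at hr2 ⊢
        nlinarith [sq_nonneg (a + d), sq_nonneg (c - b)]
      · refine ⟨(a + d) / r, (c - b) / r, ?_, ?_⟩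
        · field_simp
          linarith
        · field_simp
          linarith
    have hQ : (!![p, -q; q, p] : Matrix (Fin 2) (Fin 2) ℝ)ᵀ * !![p, -q; q, p] = 1 := by
      ext i j
      fin_cases i <;> fin_cases j <;>
        simp [Matrix.mul_apply, Fin.sum_univ_two] <;> linarith
    refine ⟨!![p, -q; q, p], hQ, ?_, ?_⟩
    · rw [Matrix.det_fin_two_of]
      linarith
    · rw [proc_expand n Zi Zj _ hQ, key]
      simp
      linarith
  · rintro x ⟨Q, hQ, hdet, rfl⟩
    rw [proc_expand n Zi Zj Q hQ, key]
    have e00 := congrFun (congrFun hQ 0) 0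
    have e11 := congrFun (congrFun hQ 1) 1
    simp [Matrix.mul_apply, Fin.sum_univ_two] at e00 e11
    rw [Matrix.det_fin_two] at hdet
    have hs : (Q 0 0 - Q 1 1) ^ 2 + (Q 0 1 + Q 1 0) ^ 2 = 0 := by linarith
    have h1 : Q 1 1 = Q 0 0 := by
      nlinarith [sq_nonneg (Q 0 0 - Q 1 1), sq_nonneg (Q 0 1 + Q 1 0)]
    have h2 : Q 0 1 = - Q 1 0 := by
      nlinarith [sq_nonneg (Q 0 0 - Q 1 1), sq_nonneg (Q 0 1 + Q 1 0)]
    rw [h1, h2]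
    have hle : Q 0 0 * (a + d) + Q 1 0 * (c - b) ≤ r := by
      apply Real.le_sqrt_of_sq_le
      have : (a + d) ^ 2 + (c - b) ^ 2 =
          (Q 0 0 * Q 0 0 + Q 1 0 * Q 1 0) * ((a + d) ^ 2 + (c - b) ^ 2) := by
        rw [e00, one_mul]
      rw [this]
      nlinarith [sq_nonneg (Q 0 0 * (c - b) - Q 1 0 * (a + d))]
    linarith
end

section
/- Let d be a positive integer and let M ∈ ℝ^{d×d}. Then the maximum over all orthogonal matrices Q ∈ O(d) of tr(Qᵀ M) exists and equals tr((Mᵀ M)^{1/2}), where (Mᵀ M)^{1/2} denotes the unique positive-semidefinite square root of the positive-semidefinite matrix Mᵀ M. -/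
open Matrix

theorem aux_W {d : ℕ} (N : Matrix (Fin d) (Fin d) ℝ) (l : Fin d → ℝ)
    (h : Nᵀ * N = diagonal (fun i => l i * l i)) :
    ∃ W : Matrix (Fin d) (Fin d) ℝ, Wᵀ * W = 1 ∧ N = W * diagonal l := by
  have hN : ∀ i j, ∑ k, N k i * N k j = if i = j then l i * l i else 0 := by
    intro i j
    have := congrFun (congrFun h i) j
    simpa [Matrix.mul_apply, diagonal_apply] using this
  let v : Fin d → EuclideanSpace ℝ (Fin d) := fun i => WithLp.toLp 2 (fun k => N k i / l i)
  have hv : Orthonormal ℝ (Set.domRestrict {i | l i ≠ 0} v) := by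
    rw [orthonormal_iff_ite]
    rintro ⟨i, hi⟩ ⟨j, hj⟩
    have hi' : l i ≠ 0 := hi
    have hj' : l j ≠ 0 := hj
    have : inner ℝ (v i) (v j) = (∑ k, N k i * N k j) / (l i * l j) := by
      simp only [v, PiLp.inner_apply, Finset.sum_div]
      refine Finset.sum_congr rfl fun k _ => ?_
      simp
      field_simp
    simp only [Set.domRestrict_apply, this, hN, Subtype.mk.injEq]
    split_ifs with hij
    · subst hij; field_simp
    · simp
  obtain ⟨b, hb⟩ := hv.exists_orthonormalBasis_extension_of_card_eq (by simp)
  refine ⟨Matrix.of fun k i => b i k, ?_, ?_⟩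
  · ext i j
    have := (orthonormal_iff_ite.1 b.orthonormal) i j
    simp only [PiLp.inner_apply] at this
    simp only [Matrix.mul_apply, transpose_apply, of_apply, one_apply, ← this]
    refine Finset.sum_congr rfl fun k _ => ?_
    simp [mul_comm]
  · ext k i
    rw [mul_diagonal, of_apply]
    by_cases hi : l i = 0
    · have h0 := hN i i
      simp only [hi, if_true, mul_zero] at h0
      have := (Finset.sum_eq_zero_iff_of_nonneg (fun k _ => mul_self_nonneg (N k i))).1 h0 k
        (Finset.mem_univ k)
      simp [hi, mul_self_eq_zero.1 this]
    · rw [hb i hi]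
      simp [v, hi]

theorem aux_polar {d : ℕ} (M S : Matrix (Fin d) (Fin d) ℝ) (hS : S.PosSemidef)
    (hS_sq : S * S = Mᵀ * M) :
    ∃ U : Matrix (Fin d) (Fin d) ℝ, Uᵀ * U = 1 ∧ M = U * S := by
  obtain ⟨V, l, hV, hV', hSV⟩ : ∃ (V : Matrix (Fin d) (Fin d) ℝ) (l : Fin d → ℝ),
      Vᵀ * V = 1 ∧ V * Vᵀ = 1 ∧ S = V * diagonal l * Vᵀ := by
    refine ⟨hS.1.eigenvectorUnitary, hS.1.eigenvalues, ?_, ?_, ?_⟩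
    · have := Unitary.coe_star_mul_self hS.1.eigenvectorUnitary
      simpa [star_eq_conjTranspose, conjTranspose_eq_transpose_of_trivial] using this
    · have := Unitary.coe_mul_star_self hS.1.eigenvectorUnitary
      simpa [star_eq_conjTranspose, conjTranspose_eq_transpose_of_trivial] using this
    · have := hS.1.spectral_theorem
      simpa [Unitary.conjStarAlgAut_apply, star_eq_conjTranspose,
        conjTranspose_eq_transpose_of_trivial, Function.comp_def] using this
  have key : (M * V)ᵀ * (M * V) = diagonal (fun i => l i * l i) := by
    calc (M * V)ᵀ * (M * V) = Vᵀ * (Mᵀ * M) * V := by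
          simp only [transpose_mul, Matrix.mul_assoc]
      _ = (Vᵀ * V) * diagonal l * (Vᵀ * V) * diagonal l * (Vᵀ * V) := by
          rw [← hS_sq, hSV]; simp only [Matrix.mul_assoc]
      _ = _ := by simp [hV]
  obtain ⟨W, hW, hN⟩ := aux_W _ _ key
  refine ⟨W * Vᵀ, ?_, ?_⟩
  · calc (W * Vᵀ)ᵀ * (W * Vᵀ) = V * (Wᵀ * W) * Vᵀ := by
          simp only [transpose_mul, transpose_transpose, Matrix.mul_assoc]
      _ = 1 := by simp [hW, hV']
  · calc M = M * (V * Vᵀ) := by simp [hV']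
      _ = W * diagonal l * Vᵀ := by rw [← hN, Matrix.mul_assoc]
      _ = W * (Vᵀ * V) * diagonal l * Vᵀ := by simp [hV]
      _ = _ := by rw [hSV]; simp only [Matrix.mul_assoc]

open scoped MatrixOrder Matrix.Norms.L2Operator in
theorem aux_le {d : ℕ} (S W : Matrix (Fin d) (Fin d) ℝ) (hS : S.PosSemidef)
    (hW : Wᵀ * W = 1) : trace (W * S) ≤ trace S := by
  obtain ⟨B, hB⟩ : ∃ B : Matrix (Fin d) (Fin d) ℝ, S = B * Bᵀ := by
    obtain ⟨B, hB⟩ := CStarAlgebra.nonneg_iff_eq_star_mul_self.mp hS.nonneg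
    exact ⟨Bᵀ, by simpa [star_eq_conjTranspose, conjTranspose_eq_transpose_of_trivial] using hB⟩
  have h0 : 0 ≤ trace ((B - W * B)ᵀ * (B - W * B)) := by
    simp only [trace, diag_apply, Matrix.mul_apply, transpose_apply]
    exact Finset.sum_nonneg fun i _ => Finset.sum_nonneg fun k _ => mul_self_nonneg _
  have h1 : (B - W * B)ᵀ * (B - W * B)
      = Bᵀ * B - Bᵀ * (W * B) - (Bᵀ * (W * B))ᵀ + Bᵀ * (Wᵀ * W) * B := by
    simp only [transpose_sub, transpose_mul, transpose_transpose, Matrix.sub_mul, Matrix.mul_sub,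
      Matrix.mul_assoc]
    abel
  rw [h1, hW] at h0
  simp only [trace_add, trace_sub, trace_transpose, Matrix.mul_one] at h0
  have h2 : trace (W * S) = trace (Bᵀ * (W * B)) := by
    rw [hB, ← Matrix.mul_assoc, trace_mul_comm]
  have h3 : trace S = trace (Bᵀ * B) := by rw [hB, trace_mul_comm]
  linarith

/-- For `M ∈ ℝ^{d×d}`, the maximum over orthogonal `Q ∈ O(d)` of `tr(Qᵀ M)`
exists and equals `tr((Mᵀ M)^{1/2})`, where `S` below is the unique positive-semidefinite
square root of the positive-semidefinite matrix `Mᵀ M`. -/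
theorem stmt3 (d : ℕ) (hd : 0 < d) (M : Matrix (Fin d) (Fin d) ℝ)
    (S : Matrix (Fin d) (Fin d) ℝ) (hS : S.PosSemidef) (hS_sq : S * S = Mᵀ * M) :
    IsGreatest
      {x : ℝ | ∃ Q : Matrix (Fin d) (Fin d) ℝ, Qᵀ * Q = 1 ∧
        x = Matrix.trace (Qᵀ * M)}
      (Matrix.trace S) := by
  obtain ⟨U, hU, hM⟩ := aux_polar M S hS hS_sq
  refine ⟨⟨U, hU, ?_⟩, ?_⟩
  · rw [hM, ← Matrix.mul_assoc, hU, Matrix.one_mul]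
  · rintro x ⟨Q, hQ, rfl⟩
    rw [hM, ← Matrix.mul_assoc]
    refine aux_le S _ hS ?_
    have hQ' : Q * Qᵀ = 1 := mul_eq_one_comm.1 hQ
    calc (Qᵀ * U)ᵀ * (Qᵀ * U) = Uᵀ * (Q * Qᵀ) * U := by
          simp only [transpose_mul, transpose_transpose, Matrix.mul_assoc]
      _ = 1 := by simp [hQ', hU]
end

section
/- Let n, d be positive integers and let Z_i, Z_j ∈ ℝ^{n×d}. Set G_i = Z_i Z_iᵀ and G_j = Z_j Z_jᵀ. Then the minimum over all orthogonal matrices Q ∈ O(d) of the squared Frobenius norm ‖Z_j Q − Z_i‖_F² equals tr(G_i) + tr(G_j) − 2·tr((G_i^{1/2} G_j G_i^{1/2})^{1/2}), where S^{1/2} denotes the unique positive-semidefinite square root of a positive-semidefinite matrix S. -/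
open Matrix

/-- The trace of a psd square root is read off the characteristic polynomial of the square. -/
theorem trace_sqrt_charpoly {n : ℕ} (S : Matrix (Fin n) (Fin n) ℝ) (hS : S.PosSemidef) :
    S.trace = (((S * S).charpoly.roots).map Real.sqrt).sum := by
  have h1 := hS.1.spectral_theorem
  have h2 : (S * S).charpoly = ∏ i, (Polynomial.X - Polynomial.C ((hS.1.eigenvalues i) ^ 2)) := by
    conv_lhs => rw [h1, ← map_mul, Unitary.conjStarAlgAut_apply, charpoly_mul_comm, ← mul_assoc]
    simp [charpoly_diagonal, sq]
  rw [h2, Polynomial.roots_prod _ _ (Finset.prod_ne_zero_iff.2 fun i _ => Polynomial.X_sub_C_ne_zero _)]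
  rw [hS.1.trace_eq_sum_eigenvalues]
  simp only [Polynomial.roots_X_sub_C, Multiset.bind_singleton, Multiset.map_map]
  simp only [Function.comp_def, Real.sqrt_sq (hS.eigenvalues_nonneg _)]
  rfl

theorem trace_sqrt_eq {n d : ℕ} (A : Matrix (Fin d) (Fin n) ℝ)
    (S : Matrix (Fin n) (Fin n) ℝ) (hS : S.PosSemidef) (h : S * S = Aᵀ * A)
    (T : Matrix (Fin d) (Fin d) ℝ) (hT : T.PosSemidef) (h' : T * T = A * Aᵀ) :
    S.trace = T.trace := by
  rw [trace_sqrt_charpoly S hS, trace_sqrt_charpoly T hT, h, h']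
  have := congrArg (fun p => (p.roots.map Real.sqrt).sum) (charpoly_mul_comm' A Aᵀ)
  rw [Polynomial.roots_mul, Polynomial.roots_mul] at this
  · simpa [Multiset.map_nsmul, Multiset.sum_nsmul] using this.symm
  · exact mul_ne_zero (pow_ne_zero _ Polynomial.X_ne_zero) (charpoly_monic _).ne_zero
  · exact mul_ne_zero (pow_ne_zero _ Polynomial.X_ne_zero) (charpoly_monic _).ne_zero

theorem exists_orthogonal {d : ℕ} (T N : Matrix (Fin d) (Fin d) ℝ) (h : Tᵀ * T = Nᵀ * N) :
    ∃ W : Matrix (Fin d) (Fin d) ℝ, Wᵀ * W = 1 ∧ W * T = N := by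
  let t := toEuclideanLin T
  let m := toEuclideanLin N
  have key : ∀ A : Matrix (Fin d) (Fin d) ℝ, ∀ x : EuclideanSpace ℝ (Fin d),
      ‖toEuclideanLin A x‖ ^ 2 = x.ofLp ⬝ᵥ ((Aᵀ * A) *ᵥ x.ofLp) := by
    intro A x
    rw [EuclideanSpace.real_norm_sq_eq, ← mulVec_mulVec, dotProduct_mulVec, vecMul_transpose]
    simp [dotProduct, sq]
  have hn : ∀ x, ‖m x‖ = ‖t x‖ := by
    intro x
    rw [← sq_eq_sq₀ (norm_nonneg _) (norm_nonneg _), key, key, h]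
  obtain ⟨s, hs⟩ := t.rangeRestrict.exists_rightInverse_of_surjective t.range_rangeRestrict
  have hs' : ∀ y, t (s y) = y := fun y => congrArg Subtype.val (LinearMap.congr_fun hs y)
  let f : LinearMap.range t →ₗᵢ[ℝ] EuclideanSpace ℝ (Fin d) :=
    ⟨m ∘ₗ s, fun y => by simp [hn, hs']⟩
  have hf : ∀ x, f.extend (t x) = m x := by
    intro x
    have e := f.extend_apply ⟨t x, x, rfl⟩
    simp only at e
    rw [e]
    change m (s _) = m x
    rw [← sub_eq_zero, ← map_sub, ← norm_eq_zero, hn, map_sub, hs']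
    simp
  let W := toEuclideanLin.symm f.extend.toLinearMap
  have hW : toEuclideanLin W = f.extend.toLinearMap := by simp [W]
  refine ⟨W, ?_, ?_⟩
  · apply toEuclideanLin.injective
    ext1 x
    refine ext_inner_left ℝ fun y => ?_
    have := f.extend.inner_map_map y x
    rw [← LinearIsometry.coe_toLinearMap, ← hW] at this
    have e : toEuclideanLin (Wᵀ * W) x = LinearMap.adjoint (toEuclideanLin W) (toEuclideanLin W x) := by
      rw [← toEuclideanLin_conjTranspose_eq_adjoint]
      simp [toLpLin_apply]
    rw [e, LinearMap.adjoint_inner_right, this]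
    simp [toLpLin_apply]
  · apply toEuclideanLin.injective
    ext1 x
    have : toEuclideanLin (W * T) x = toEuclideanLin W (t x) := by
      simp [t, toLpLin_apply]
    rw [this, hW]
    exact hf x

open scoped MatrixOrder in
theorem exists_psd_sqrt {d : ℕ} (M : Matrix (Fin d) (Fin d) ℝ) :
    ∃ T : Matrix (Fin d) (Fin d) ℝ, T.PosSemidef ∧ T * T = M * Mᵀ := by
  have : (M * Mᵀ).PosSemidef := by simpa using posSemidef_self_mul_conjTranspose M
  exact ⟨CFC.sqrt (M * Mᵀ), (CFC.sqrt_nonneg _).posSemidef, CFC.sqrt_mul_sqrt_self _ this.nonneg⟩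

theorem trace_le {d : ℕ} (T O : Matrix (Fin d) (Fin d) ℝ) (hT : T.PosSemidef)
    (hO : Oᵀ * O = 1) : (O * T).trace ≤ T.trace := by
  have h := (hT.mul_mul_conjTranspose_same (O - 1)).trace_nonneg
  have hTt : Tᵀ = T := by simpa using hT.1.eq
  have e1 : (O * T * Oᵀ).trace = T.trace := by
    rw [trace_mul_comm, ← mul_assoc, hO, one_mul]
  have e2 : (T * Oᵀ).trace = (O * T).trace := by
    rw [← trace_transpose, transpose_mul, hTt, transpose_transpose]
  simp only [conjTranspose_eq_transpose_of_trivial, transpose_sub, transpose_one, sub_mul, mul_sub,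
    one_mul, mul_one, trace_sub, e1, e2] at h
  linarith

theorem stmt4 (n d : ℕ) (hn : 0 < n) (hd : 0 < d)
    (Zi Zj : Matrix (Fin n) (Fin d) ℝ)
    (R : Matrix (Fin n) (Fin n) ℝ) (hR : R.PosSemidef) (hR_sq : R * R = Zi * Ziᵀ)
    (S : Matrix (Fin n) (Fin n) ℝ) (hS : S.PosSemidef)
    (hS_sq : S * S = R * (Zj * Zjᵀ) * R) :
    IsLeast
      {x : ℝ | ∃ Q : Matrix (Fin d) (Fin d) ℝ, Qᵀ * Q = 1 ∧
        x = Matrix.trace ((Zj * Q - Zi)ᵀ * (Zj * Q - Zi))}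
      (Matrix.trace (Zi * Ziᵀ) + Matrix.trace (Zj * Zjᵀ) - 2 * Matrix.trace S) := by
  have hRt : Rᵀ = R := by simpa using hR.1.eq
  obtain ⟨T, hT, hTT⟩ := exists_psd_sqrt (Zjᵀ * Zi)
  have hTt : Tᵀ = T := by simpa using hT.1.eq
  have hST : S.trace = T.trace := by
    refine trace_sqrt_eq (Zjᵀ * R) S hS ?_ T hT ?_
    · rw [hS_sq, transpose_mul, hRt, transpose_transpose]; simp only [Matrix.mul_assoc]
    · rw [hTT, transpose_mul, transpose_mul, hRt, transpose_transpose, Matrix.mul_assoc,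
        ← Matrix.mul_assoc Zi, ← hR_sq]
      simp only [Matrix.mul_assoc]
  obtain ⟨W, hW, hWT⟩ := exists_orthogonal T (Zjᵀ * Zi)ᵀ (by rw [hTt, hTT, transpose_transpose])
  have hW' : W * Wᵀ = 1 := mul_eq_one_comm.1 hW
  have hexp : ∀ Q : Matrix (Fin d) (Fin d) ℝ, Qᵀ * Q = 1 →
      Matrix.trace ((Zj * Q - Zi)ᵀ * (Zj * Q - Zi)) =
        Matrix.trace (Zi * Ziᵀ) + Matrix.trace (Zj * Zjᵀ) - 2 * Matrix.trace (W * T * Q) := by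
    intro Q hQ
    have hQ' : Q * Qᵀ = 1 := mul_eq_one_comm.1 hQ
    have a1 : (W * T * Q).trace = (Ziᵀ * (Zj * Q)).trace := by
      rw [hWT, transpose_mul, transpose_transpose, Matrix.mul_assoc]
    have a2 : ((Zj * Q)ᵀ * Zi).trace = (Ziᵀ * (Zj * Q)).trace := by
      rw [← trace_transpose, transpose_mul, transpose_transpose]
    have a3 : ((Zj * Q)ᵀ * (Zj * Q)).trace = (Zj * Zjᵀ).trace := by
      rw [trace_mul_comm, transpose_mul, Matrix.mul_assoc, ← Matrix.mul_assoc Q, hQ', Matrix.one_mul]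
    have a4 : (Ziᵀ * Zi).trace = (Zi * Ziᵀ).trace := trace_mul_comm _ _
    rw [transpose_sub, Matrix.sub_mul, Matrix.mul_sub, Matrix.mul_sub, trace_sub, trace_sub,
      trace_sub, a1, a2, a3, a4]
    ring
  constructor
  · refine ⟨Wᵀ, by rw [transpose_transpose, hW'], ?_⟩
    rw [hexp _ (by rw [transpose_transpose, hW']), trace_mul_comm (W * T) Wᵀ, ← Matrix.mul_assoc, hW,
      Matrix.one_mul, hST]
  · rintro x ⟨Q, hQ, rfl⟩
    rw [hexp Q hQ, trace_mul_comm (W * T) Q, ← Matrix.mul_assoc, hST]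
    have := trace_le T (Q * W) hT (by
      rw [transpose_mul, Matrix.mul_assoc, ← Matrix.mul_assoc Qᵀ, hQ, Matrix.one_mul, hW])
    linarith
end

section
/- Let n, d be positive integers and let Z_i, Z_j ∈ ℝ^{n×d}. Set G_i = Z_i Z_iᵀ. Then tr((G_i^{1/2} (Z_j Z_jᵀ) G_i^{1/2})^{1/2}) = tr((Mᵀ M)^{1/2}), where M = Z_jᵀ Z_i and S^{1/2} denotes the unique positive-semidefinite square root of a positive-semidefinite matrix S. In other words, the trace term appearing in the Riemannian distance formula on positive-semidefinite matrices equals the sum of the singular values of Z_jᵀ Z_i. -/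
open Matrix

lemma aux_trace {m : ℕ} (S : Matrix (Fin m) (Fin m) ℝ) (hS : S.PosSemidef) :
    S.trace = ((S * S).charpoly.roots.map Real.sqrt).sum := by
  have h1 : S * S = cfc (fun x : ℝ => x ^ 2) S := by
    rw [cfc_pow_id (R := ℝ) S 2 hS.1.isSelfAdjoint, pow_two]
  rw [h1, hS.1.charpoly_cfc_eq, hS.1.trace_eq_sum_eigenvalues, Polynomial.roots_prod _ _
    (Finset.prod_ne_zero_iff.mpr fun i _ => Polynomial.X_sub_C_ne_zero _)]
  simp only [Polynomial.roots_X_sub_C, Multiset.bind_singleton, Multiset.map_map]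
  simp [Real.sqrt_sq (hS.eigenvalues_nonneg _), Finset.sum]

lemma aux_roots {n d : ℕ} (A : Matrix (Fin n) (Fin d) ℝ) (B : Matrix (Fin d) (Fin n) ℝ) :
    ((A * B).charpoly.roots.map Real.sqrt).sum = ((B * A).charpoly.roots.map Real.sqrt).sum := by
  have h := congrArg (fun p : Polynomial ℝ => (p.roots.map Real.sqrt).sum)
    (Matrix.charpoly_mul_comm' A B)
  have key : ∀ (k : ℕ) (p : Polynomial ℝ), p ≠ 0 →
      ((Polynomial.X ^ k * p).roots.map Real.sqrt).sum = (p.roots.map Real.sqrt).sum := by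
    intro k p hp
    rw [Polynomial.roots_mul (mul_ne_zero (pow_ne_zero _ Polynomial.X_ne_zero) hp)]
    simp [Multiset.map_nsmul, Multiset.sum_nsmul]
  rwa [key _ _ (Matrix.charpoly_monic _).ne_zero, key _ _ (Matrix.charpoly_monic _).ne_zero] at h


/-- With `G_i = Z_i Z_iᵀ` and `M = Z_jᵀ Z_i`, one has
`tr((G_i^{1/2} (Z_j Z_jᵀ) G_i^{1/2})^{1/2}) = tr((Mᵀ M)^{1/2})`.  Here `R` is the unique
positive-semidefinite square root of `G_i`, `S` the unique positive-semidefinite square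
root of `G_i^{1/2} (Z_j Z_jᵀ) G_i^{1/2}`, and `T` the unique positive-semidefinite square
root of `Mᵀ M`. -/
theorem stmt10 (n d : ℕ) (hn : 0 < n) (hd : 0 < d)
    (Zi Zj : Matrix (Fin n) (Fin d) ℝ)
    (R : Matrix (Fin n) (Fin n) ℝ) (hR : R.PosSemidef) (hR_sq : R * R = Zi * Ziᵀ)
    (S : Matrix (Fin n) (Fin n) ℝ) (hS : S.PosSemidef)
    (hS_sq : S * S = R * (Zj * Zjᵀ) * R)
    (T : Matrix (Fin d) (Fin d) ℝ) (hT : T.PosSemidef)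
    (hT_sq : T * T = (Zjᵀ * Zi)ᵀ * (Zjᵀ * Zi)) :
    Matrix.trace S = Matrix.trace T := by
  rw [aux_trace S hS, aux_trace T hT, hS_sq, hT_sq]
  have e1 : R * (Zj * Zjᵀ) * R = R * (Zj * Zjᵀ * R) := by simp only [Matrix.mul_assoc]
  have e2 : Zj * Zjᵀ * R * R = (Zj * Zjᵀ * Zi) * Ziᵀ := by
    rw [Matrix.mul_assoc _ R R, hR_sq]; simp only [Matrix.mul_assoc]
  have e3 : (Zjᵀ * Zi)ᵀ * (Zjᵀ * Zi) = Ziᵀ * (Zj * Zjᵀ * Zi) := by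
    simp only [Matrix.transpose_mul, Matrix.transpose_transpose, Matrix.mul_assoc]
  rw [e1, aux_roots, e2, aux_roots, e3]
end
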